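/- Let d ≥ 1 and let u : ℝ → 𝒮(ℝ^d; ℂ) be a Schwartz solution of the linear Schrödinger equation. Let φ : ℝ^d → ℝ be a bounded continuously differentiable function with bounded gradient. Then for every t ∈ ℝ, the function t ↦ ∫_{ℝ^d} φ(x)² |u(t,x)|² dx is differentiable and d/dt ∫_{ℝ^d} φ(x)² |u(t,x)|² dx = 4 Im ∫_{ℝ^d} φ(x) · conj(u(t,x)) · (∇φ(x) · ∇_x u(t,x)) dx. -/

import Mathlib

open MeasureTheory Filter
open scoped RealInnerProductSpace

noncomputable section

abbrev Ed (d : ℕ) : Type := EuclideanSpace ℝ (Fin d)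

/-- The `i`-th standard basis vector of `ℝ^d`. -/
def stdBasis {d : ℕ} (i : Fin d) : Ed d := EuclideanSpace.single i 1

/-- The `i`-th spatial partial derivative. -/
def pd {d : ℕ} (f : Ed d → ℂ) (i : Fin d) (x : Ed d) : ℂ :=
  fderiv ℝ f x (stdBasis i)

/-- The spatial Laplacian. -/
def lap {d : ℕ} (f : Ed d → ℂ) (x : Ed d) : ℂ :=
  ∑ i, pd (pd f i) i x

/-- Squared (Euclidean) pointwise norm of the spatial gradient. -/
def gradNormSq {d : ℕ} (f : Ed d → ℂ) (x : Ed d) : ℝ :=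
  ∑ i, ‖pd f i x‖ ^ 2

/-- `L²` norm of `f` restricted to a set `s`. -/
def L2On {d : ℕ} (s : Set (Ed d)) (f : Ed d → ℂ) : ℝ :=
  (∫ x in s, ‖f x‖ ^ 2) ^ (1/2 : ℝ)

/-- `L²` norm of `f` on all of `ℝ^d`. -/
def L2 {d : ℕ} (f : Ed d → ℂ) : ℝ :=
  (∫ x, ‖f x‖ ^ 2) ^ (1/2 : ℝ)

/-- `L²` norm of the spatial gradient of `f`. -/
def gradL2 {d : ℕ} (f : Ed d → ℂ) : ℝ :=
  (∫ x, gradNormSq f x) ^ (1/2 : ℝ)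

/-- Distance between two sets. -/
def setDist {d : ℕ} (A B : Set (Ed d)) : ℝ :=
  sInf (Set.image2 dist A B)

/-- A Schwartz solution of the linear Schrödinger equation:
smooth in time-space and `∂ₜ u = i Δ u`. -/
def IsLinSchrodSol (d : ℕ) (u : ℝ → SchwartzMap (Ed d) ℂ) : Prop :=
  ContDiff ℝ (⊤ : ℕ∞) (fun p : ℝ × Ed d => u p.1 p.2) ∧
  ∀ t x, deriv (fun s => u s x) t = Complex.I * lap (u t) x

/-- A Schwartz solution of the nonlinear Schrödinger equation with parameters `lam, σ`:
smooth in time-space and `∂ₜ u = i (Δ u + lam |u|^σ u)`. -/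
def IsNLSSol (d : ℕ) (lam σ : ℝ) (u : ℝ → SchwartzMap (Ed d) ℂ) : Prop :=
  ContDiff ℝ (⊤ : ℕ∞) (fun p : ℝ × Ed d => u p.1 p.2) ∧
  ∀ t x, deriv (fun s => u s x) t =
    Complex.I * (lap (u t) x + ((lam * ‖u t x‖ ^ σ : ℝ) : ℂ) * u t x)


open scoped FourierTransform Laplacian SchwartzMap ContDiff LineDeriv Topology
open SchwartzMap

lemma lap_eq {d : ℕ} (f : 𝓢(Ed d, ℂ)) (x : Ed d) : lap (⇑f) x = (Δ f) x := by
  rw [laplacian_eq_sum (EuclideanSpace.basisFun (Fin d) ℝ), _root_.sum_apply]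
  unfold lap
  refine Finset.sum_congr rfl fun i _ => ?_
  have h : ∀ g : 𝓢(Ed d, ℂ), pd (⇑g) i = ⇑(∂_{(EuclideanSpace.basisFun (Fin d) ℝ) i} g : 𝓢(Ed d, ℂ)) := by
    intro g
    ext y
    rw [lineDerivOp_apply_eq_fderiv]
    simp [pd, stdBasis]
  rw [h, h]

lemma fourier_lap {d : ℕ} (f : 𝓢(Ed d, ℂ)) (ξ : Ed d) :
    𝓕 (Δ f) ξ = -(((2 * Real.pi) ^ 2 * ‖ξ‖ ^ 2 : ℝ) : ℂ) * 𝓕 f ξ := by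
  rw [laplacian_eq_fourierMultiplierCLM, FourierTransform.fourier_smul, fourierMultiplierCLM_apply,
    FourierTransform.fourier_fourierInv_eq, _root_.smul_apply,
    SchwartzMap.smulLeftCLM_apply_apply (by fun_prop)]
  simp
  ring

lemma sq_norm_toLp {d : ℕ} (f : 𝓢(Ed d, ℂ)) : ‖f.toLp 2‖ ^ 2 = ∫ x, ‖f x‖ ^ 2 := by
  rw [norm_toLp' (by simp) (by simp)]
  have : 0 ≤ ∫ x, ‖f x‖ ^ 2 := integral_nonneg fun x => by positivity
  have h2 : (2 : ENNReal).toReal = 2 := rfl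
  rw [h2]
  simp only [Real.rpow_two]
  rw [← Real.rpow_two, ← Real.rpow_mul this]
  norm_num

lemma integrable_sq {d : ℕ} (f : 𝓢(Ed d, ℂ)) : Integrable (fun x => ‖f x‖ ^ 2) :=
  (f.memLp 2 volume).integrable_norm_pow (by norm_num)

lemma inner_lap {d : ℕ} (f g : 𝓢(Ed d, ℂ)) :
    inner ℂ (f.toLp 2) ((Δ g).toLp 2) = inner ℂ ((Δ f).toLp 2) (g.toLp 2) := by
  rw [← inner_fourier_toL2_eq, ← inner_fourier_toL2_eq (Δ f)]
  rw [inner_toL2_toL2_eq _ _ volume, inner_toL2_toL2_eq _ _ volume]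
  congr 1
  ext ξ
  rw [fourier_lap, fourier_lap]
  simp only [RCLike.inner_apply, map_mul, map_neg, Complex.conj_ofReal]
  ring

/-- norm comparison -/
lemma norm_toLp_le_of {d : ℕ} (f g : 𝓢(Ed d, ℂ)) (c : ℝ) (hc : 0 ≤ c)
    (h : ∀ ξ, ‖f ξ‖ ≤ c * ‖g ξ‖) : ‖f.toLp 2‖ ≤ c * ‖g.toLp 2‖ := by
  apply le_of_sq_le_sq _ (by positivity)
  rw [mul_pow, sq_norm_toLp, sq_norm_toLp, ← integral_const_mul]
  refine integral_mono (integrable_sq f) ((integrable_sq g).const_mul _) fun x => ?_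
  simp only
  rw [← mul_pow]
  exact pow_le_pow_left₀ (norm_nonneg _) (h x) 2

def mm {d : ℕ} (t : ℝ) (ξ : Ed d) : ℂ :=
  Complex.exp (-(((2 * Real.pi) ^ 2 * ‖ξ‖ ^ 2 * t : ℝ) : ℂ) * Complex.I)

lemma norm_mm {d : ℕ} (t : ℝ) (ξ : Ed d) : ‖mm t ξ‖ = 1 := by
  unfold mm
  rw [← Complex.ofReal_neg, Complex.norm_exp_ofReal_mul_I]

lemma mm_add {d : ℕ} (t s : ℝ) (ξ : Ed d) : mm (t + s) ξ = mm t ξ * mm s ξ := by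
  unfold mm
  rw [← Complex.exp_add]
  congr 1
  push_cast
  ring

lemma mm_zero {d : ℕ} (ξ : Ed d) : mm 0 ξ = 1 := by
  simp [mm]

lemma mm_taylor {d : ℕ} (h : ℝ) (ξ : Ed d) :
    ‖mm h ξ - 1 - h * (Complex.I * (-(((2 * Real.pi) ^ 2 * ‖ξ‖ ^ 2 : ℝ) : ℂ)))‖
      ≤ 3 * h ^ 2 * ((2 * Real.pi) ^ 2 * ‖ξ‖ ^ 2) ^ 2 := by
  set c := (2 * Real.pi) ^ 2 * ‖ξ‖ ^ 2 with hc
  have e : (h : ℂ) * (Complex.I * (-(c : ℂ))) = -((c * h : ℝ) : ℂ) * Complex.I := by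
    push_cast; ring
  rw [e]
  unfold mm
  rw [← hc]
  set z : ℂ := -((c * h : ℝ) : ℂ) * Complex.I with hz
  have hzn : ‖z‖ = |c * h| := by rw [hz]; simp
  have hsq : ‖z‖ ^ 2 = h ^ 2 * c ^ 2 := by rw [hzn, sq_abs]; ring
  by_cases h1 : ‖z‖ ≤ 1
  · have := Complex.norm_exp_sub_one_sub_id_le h1
    nlinarith [sq_nonneg ‖z‖]
  · push Not at h1
    have h3 : ‖Complex.exp z‖ = 1 := by
      rw [hz, ← Complex.ofReal_neg, Complex.norm_exp_ofReal_mul_I]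
    have : ‖Complex.exp z - 1 - z‖ ≤ 1 + 1 + ‖z‖ := by
      refine (norm_sub_le _ _).trans (add_le_add ?_ le_rfl)
      refine (norm_sub_le _ _).trans (by simp [h3])
    nlinarith

lemma contDiff_mm {d : ℕ} (t : ℝ) : ContDiff ℝ ∞ (fun ξ : Ed d => mm t ξ) := by
  unfold mm
  apply ContDiff.cexp
  apply ContDiff.mul _ contDiff_const
  apply ContDiff.neg
  apply Complex.ofRealCLM.contDiff.comp
  exact (contDiff_const.mul (contDiff_norm_sq ℝ)).mul contDiff_const

lemma tendsto_toLp_zero {d : ℕ} (f : ℕ → 𝓢(Ed d, ℂ)) (C : ℝ)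
    (hC : ∀ n x, (1 + ‖x‖) ^ (d + 1) * ‖f n x‖ ≤ C)
    (h0 : ∀ x, ∀ᶠ n in atTop, f n x = 0) :
    Tendsto (fun n => ‖(f n).toLp 2‖) atTop (𝓝 0) := by
  have key : Tendsto (fun n => ∫ x, ‖f n x‖ ^ 2) atTop (𝓝 (∫ _x : Ed d, (0 : ℝ))) := by
    apply tendsto_integral_of_dominated_convergence
      (fun x : Ed d => C ^ 2 * (1 + ‖x‖) ^ (-((d + 1 : ℕ) : ℝ)))
    · intro n
      exact (integrable_sq (f n)).aestronglyMeasurable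
    · apply Integrable.const_mul
      apply integrable_one_add_norm
      simp
    · intro n
      refine Eventually.of_forall fun x => ?_
      have h1 : 1 ≤ (1 + ‖x‖) ^ (d + 1) := one_le_pow₀ (by linarith [norm_nonneg x])
      have hpos : 0 < (1 + ‖x‖) ^ (d + 1) := by linarith
      rw [Real.rpow_neg (by positivity), Real.rpow_natCast, ← div_eq_mul_inv, le_div_iff₀ hpos]
      have h2 := hC n x
      have h3 : ((1 + ‖x‖) ^ (d + 1) * ‖f n x‖) ^ 2 ≤ C ^ 2 :=
        pow_le_pow_left₀ (by positivity) h2 2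
      rw [Real.norm_of_nonneg (by positivity)]
      refine le_trans ?_ h3
      rw [mul_pow, mul_comm]
      refine mul_le_mul_of_nonneg_right ?_ (by positivity)
      nlinarith
    · refine Eventually.of_forall fun x => ?_
      apply tendsto_const_nhds.congr'
      filter_upwards [h0 x] with n hn
      simp [hn]
  have h2 : Tendsto (fun n => Real.sqrt (∫ x, ‖f n x‖ ^ 2)) atTop (𝓝 0) := by
    have := (Real.continuous_sqrt.tendsto _).comp key
    simpa [Function.comp_def] using this
  refine h2.congr fun n => ?_
  rw [← sq_norm_toLp, Real.sqrt_sq (norm_nonneg _)]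

lemma norm_lap_le {d : ℕ} (f : 𝓢(Ed d, ℂ)) (x : Ed d) :
    ‖(Δ f) x‖ ≤ d * ‖iteratedFDeriv ℝ 2 f x‖ := by
  rw [laplacian_apply, InnerProductSpace.laplacian_eq_iteratedFDeriv_orthonormalBasis _ (EuclideanSpace.basisFun (Fin d) ℝ)]
  refine (norm_sum_le _ _).trans ?_
  have : ∀ i ∈ (Finset.univ : Finset (Fin d)), ‖iteratedFDeriv ℝ 2 f x ![(EuclideanSpace.basisFun (Fin d) ℝ) i, (EuclideanSpace.basisFun (Fin d) ℝ) i]‖ ≤ ‖iteratedFDeriv ℝ 2 f x‖ := by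
    intro i _
    refine (ContinuousMultilinearMap.le_opNorm _ _).trans ?_
    simp [Fin.prod_univ_two]
  refine (Finset.sum_le_sum this).trans ?_
  simp

lemma schwartz_decay {d : ℕ} (f : 𝓢(Ed d, ℂ)) (j : ℕ) :
    ∃ C, 0 ≤ C ∧ ∀ x, (1 + ‖x‖) ^ (d + 1) * ‖iteratedFDeriv ℝ j f x‖ ≤ C := by
  have h := fun x => one_add_le_sup_seminorm_apply (𝕜 := ℝ) (m := (d + 1, j)) (k := d + 1) (n := j) le_rfl le_rfl f x
  refine ⟨_, ?_, h⟩
  exact le_trans (by positivity) (h 0)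

/-- compactly supported approximations -/
lemma exists_cutoff {d : ℕ} (ψ : 𝓢(Ed d, ℂ)) :
    ∃ ψn : ℕ → 𝓢(Ed d, ℂ), (∀ n, HasCompactSupport (ψn n)) ∧
      Tendsto (fun n => ‖(ψn n - ψ).toLp 2‖) atTop (𝓝 0) ∧
      Tendsto (fun n => ‖(Δ (ψn n) - Δ ψ).toLp 2‖) atTop (𝓝 0) := by
  let b : ContDiffBump (0 : Ed d) := ⟨1, 2, by norm_num, by norm_num⟩
  have hbs : ContDiff ℝ ∞ b := b.contDiff
  let a : ℕ → ℝ := fun n => ((n : ℝ) + 1)⁻¹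
  have ha0 : ∀ n, 0 < a n := fun n => by positivity
  have ha1 : ∀ n, a n ≤ 1 := fun n => inv_le_one_of_one_le₀ (by linarith [(Nat.cast_nonneg n : (0:ℝ) ≤ n)])
  let χ : ℕ → Ed d → ℝ := fun n x => b (a n • x)
  have hχs : ∀ n, ContDiff ℝ ∞ (χ n) := fun n => hbs.comp (contDiff_const_smul (a n))
  have hχc : ∀ n, HasCompactSupport (χ n) := fun n =>
    b.hasCompactSupport.comp_homeomorph (Homeomorph.smulOfNeZero (a n) (ha0 n).ne')
  have hfs : ∀ n, ContDiff ℝ ∞ (fun x => χ n x • ψ x) := fun n => (hχs n).smul (ψ.smooth ⊤)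
  have hfc : ∀ n, HasCompactSupport (fun x => χ n x • ψ x) := fun n => (hχc n).smul_right
  let ψn : ℕ → 𝓢(Ed d, ℂ) := fun n => (hfc n).toSchwartzMap (hfs n)
  have hψn : ∀ n, (ψn n : Ed d → ℂ) = fun x => χ n x • ψ x := fun n => rfl
  have hχb : ∀ j, ∃ C, ∀ n x, ‖iteratedFDeriv ℝ j (χ n) x‖ ≤ C := by
    intro j
    obtain ⟨C, hC⟩ := (b.hasCompactSupport.iteratedFDeriv (𝕜 := ℝ) j).exists_bound_of_continuous
      (hbs.continuous_iteratedFDeriv (m := j) (by exact_mod_cast le_top))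
    refine ⟨C, fun n x => ?_⟩
    have hCn : 0 ≤ C := (norm_nonneg _).trans (hC 0)
    have : iteratedFDeriv ℝ j (χ n) = _ := iteratedFDeriv_comp_const_smul (a n) (hbs.of_le (by exact_mod_cast le_top))
    rw [this, norm_smul, norm_pow, Real.norm_of_nonneg (ha0 n).le]
    calc (a n) ^ j * _ ≤ 1 * C := mul_le_mul (pow_le_one₀ (ha0 n).le (ha1 n)) (hC _) (norm_nonneg _) zero_le_one
      _ = C := one_mul _
  have hev : ∀ x, ∀ᶠ n in atTop, (ψn n : Ed d → ℂ) =ᶠ[𝓝 x] ψ := by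
    intro x
    obtain ⟨N, hN⟩ := exists_nat_gt (‖x‖)
    filter_upwards [eventually_ge_atTop N] with n hn
    have hopen : IsOpen {y : Ed d | ‖y‖ < n + 1} := isOpen_lt continuous_norm continuous_const
    have hx : x ∈ {y : Ed d | ‖y‖ < n + 1} := by
      have : (N : ℝ) ≤ n := by exact_mod_cast hn
      show ‖x‖ < n + 1; linarith
    filter_upwards [hopen.mem_nhds hx] with y hy
    rw [hψn]
    have : χ n y = 1 := by
      apply b.one_of_mem_closedBall
      simp only [Metric.mem_closedBall, dist_zero_right, norm_smul, Real.norm_of_nonneg (ha0 n).le]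
      change ((n : ℝ) + 1)⁻¹ * ‖y‖ ≤ 1
      rw [inv_mul_le_iff₀ (by positivity)]
      have hy : ‖y‖ < n + 1 := hy
      linarith
    simp [this]
  have hev0 : ∀ x, ∀ᶠ n in atTop, ψn n x - ψ x = 0 := fun x => by
    filter_upwards [hev x] with n hn
    rw [hn.self_of_nhds, sub_self]
  have hev2 : ∀ x, ∀ᶠ n in atTop, (Δ (ψn n)) x - (Δ ψ) x = 0 := fun x => by
    filter_upwards [hev x] with n hn
    rw [laplacian_apply, laplacian_apply, (InnerProductSpace.laplacian_congr_nhds hn).self_of_nhds, sub_self]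
  obtain ⟨C0, hC0⟩ := hχb 0
  obtain ⟨C1, hC1⟩ := hχb 1
  obtain ⟨C2, hC2⟩ := hχb 2
  obtain ⟨D0, hD0, hD0'⟩ := schwartz_decay ψ 0
  obtain ⟨D1, hD1, hD1'⟩ := schwartz_decay ψ 1
  obtain ⟨D2, hD2, hD2'⟩ := schwartz_decay ψ 2
  have hC0n : 0 ≤ C0 := (norm_nonneg _).trans (hC0 0 0)
  have hC1n : 0 ≤ C1 := (norm_nonneg _).trans (hC1 0 0)
  have hC2n : 0 ≤ C2 := (norm_nonneg _).trans (hC2 0 0)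
  refine ⟨ψn, fun n => hfc n, ?_, ?_⟩
  · refine tendsto_toLp_zero _ ((C0 + 1) * D0) ?_ (fun x => by simpa using hev0 x)
    intro n x
    have h1 : ‖(ψn n - ψ) x‖ ≤ (C0 + 1) * ‖ψ x‖ := by
      rw [_root_.sub_apply, hψn]
      have := hC0 n x
      rw [norm_iteratedFDeriv_zero] at this
      refine (norm_sub_le _ _).trans ?_
      rw [norm_smul]
      nlinarith [norm_nonneg (ψ x)]
    have h2 := hD0' x
    rw [norm_iteratedFDeriv_zero] at h2
    calc _ ≤ (1 + ‖x‖) ^ (d + 1) * ((C0 + 1) * ‖ψ x‖) := by gcongr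
      _ = (C0 + 1) * ((1 + ‖x‖) ^ (d + 1) * ‖ψ x‖) := by ring
      _ ≤ _ := by gcongr
  · refine tendsto_toLp_zero _ (d * (C0 * D2 + 2 * C1 * D1 + C2 * D0) + d * D2) ?_ (fun x => by simpa using hev2 x)
    intro n x
    have hl := norm_iteratedFDeriv_smul_le (𝕜 := ℝ) (n := 2) ((hχs n)) (ψ.smooth ⊤) x (by norm_cast)
    rw [← hψn] at hl
    simp only [Finset.sum_range_succ, Finset.range_zero, Finset.sum_empty, zero_add,
      Nat.choose_zero_right, Nat.choose_self, Nat.choose_one_right, Nat.cast_one, one_mul, Nat.sub_zero,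
      Nat.cast_ofNat, Nat.reduceSub] at hl
    have h1 : ‖(Δ (ψn n) - Δ ψ) x‖ ≤ d * (C0 * ‖iteratedFDeriv ℝ 2 ψ x‖ + 2 * C1 * ‖iteratedFDeriv ℝ 1 ψ x‖ + C2 * ‖iteratedFDeriv ℝ 0 ψ x‖) + d * ‖iteratedFDeriv ℝ 2 ψ x‖ := by
      rw [_root_.sub_apply]
      refine (norm_sub_le _ _).trans (add_le_add ?_ (norm_lap_le _ _))
      refine (norm_lap_le _ _).trans ?_
      refine mul_le_mul_of_nonneg_left (hl.trans ?_) (by positivity)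
      gcongr
      · exact hC0 n x
      · exact hC1 n x
      · exact hC2 n x
    calc _ ≤ (1 + ‖x‖) ^ (d + 1) * (d * (C0 * ‖iteratedFDeriv ℝ 2 ψ x‖ + 2 * C1 * ‖iteratedFDeriv ℝ 1 ψ x‖ + C2 * ‖iteratedFDeriv ℝ 0 ψ x‖) + d * ‖iteratedFDeriv ℝ 2 ψ x‖) := by gcongr
      _ = d * (C0 * ((1 + ‖x‖) ^ (d + 1) * ‖iteratedFDeriv ℝ 2 ψ x‖) + 2 * C1 * ((1 + ‖x‖) ^ (d + 1) * ‖iteratedFDeriv ℝ 1 ψ x‖) + C2 * ((1 + ‖x‖) ^ (d + 1) * ‖iteratedFDeriv ℝ 0 ψ x‖)) + d * ((1 + ‖x‖) ^ (d + 1) * ‖iteratedFDeriv ℝ 2 ψ x‖) := by ring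
      _ ≤ _ := by gcongr <;> apply_assumption

def prn {d : ℕ} (u : ℝ → 𝓢(Ed d, ℂ)) (ψ : 𝓢(Ed d, ℂ)) (t : ℝ) : ℂ :=
  inner ℂ (ψ.toLp 2) ((u t).toLp 2)

lemma sol_hasDerivAt {d : ℕ} {u : ℝ → 𝓢(Ed d, ℂ)} (hu : IsLinSchrodSol d u) (t : ℝ) (x : Ed d) :
    HasDerivAt (fun s => u s x) (Complex.I * (Δ (u t)) x) t := by
  rw [← lap_eq, ← hu.2 t x]
  apply DifferentiableAt.hasDerivAt
  have h : Differentiable ℝ (fun p : ℝ × Ed d => u p.1 p.2) := hu.1.differentiable (by simp)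
  exact (h (t, x)).comp t (f := fun s : ℝ => (s, x)) (by fun_prop)

lemma sol_lap_continuous {d : ℕ} {u : ℝ → 𝓢(Ed d, ℂ)} (hu : IsLinSchrodSol d u) :
    Continuous (fun p : ℝ × Ed d => Complex.I * (Δ (u p.1)) p.2) := by
  have h : Differentiable ℝ (fun p : ℝ × Ed d => u p.1 p.2) := hu.1.differentiable (by simp)
  have h2 : Continuous (fun p : ℝ × Ed d => fderiv ℝ (fun p : ℝ × Ed d => u p.1 p.2) p (1, 0)) :=
    (hu.1.continuous_fderiv (by simp)).clm_apply continuous_const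
  convert h2 using 2 with p
  obtain ⟨t, x⟩ := p
  have h3 : HasDerivAt (fun s : ℝ => (s, x)) ((1 : ℝ), (0 : Ed d)) t :=
    (hasDerivAt_id t).prodMk (hasDerivAt_const t x)
  have h4 := (h (t, x)).hasFDerivAt.comp_hasDerivAt t h3
  exact (sol_hasDerivAt hu t x).unique h4

lemma prn_eq {d : ℕ} (u : ℝ → 𝓢(Ed d, ℂ)) (χ : 𝓢(Ed d, ℂ)) (s : ℝ) :
    prn u χ s = ∫ x, u s x * (starRingEnd ℂ) (χ x) := inner_toL2_toL2_eq _ _ volume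

lemma prn_lap_eq {d : ℕ} (u : ℝ → 𝓢(Ed d, ℂ)) (χ : 𝓢(Ed d, ℂ)) (t : ℝ) :
    Complex.I * prn u (Δ χ) t = ∫ x, (Complex.I * (Δ (u t)) x) * (starRingEnd ℂ) (χ x) := by
  unfold prn
  rw [← inner_lap, inner_toL2_toL2_eq _ _ volume, ← integral_const_mul]
  congr 1; ext x
  simp only [RCLike.inner_apply]; ring

lemma hasDerivAt_prn {d : ℕ} {u : ℝ → 𝓢(Ed d, ℂ)} (hu : IsLinSchrodSol d u)
    (χ : 𝓢(Ed d, ℂ)) (hc : HasCompactSupport χ) (t : ℝ) :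
    HasDerivAt (prn u χ) (Complex.I * prn u (Δ χ) t) t := by
  have e1 : prn u χ = fun s => ∫ x, u s x * (starRingEnd ℂ) (χ x) := funext (prn_eq u χ)
  rw [e1, prn_lap_eq]
  obtain ⟨C, hC⟩ := ((isCompact_Icc (a := t - 1) (b := t + 1)).prod hc.isCompact).exists_bound_of_continuousOn
    (sol_lap_continuous hu).continuousOn
  have hχ : Continuous (fun x => (starRingEnd ℂ) (χ x)) := Complex.continuous_conj.comp χ.continuous
  have m1 : ∀ s, AEStronglyMeasurable (fun x => u s x * (starRingEnd ℂ) (χ x)) (volume : Measure (Ed d)) :=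
    fun s => ((u s).continuous.mul hχ).aestronglyMeasurable
  have i1 : Integrable (fun x => u t x * (starRingEnd ℂ) (χ x)) := by
    refine Integrable.mono' (g := fun x => (‖χ x‖ ^ 2 + ‖u t x‖ ^ 2)) ((integrable_sq χ).add (integrable_sq _))
      (m1 t) ?_
    refine Eventually.of_forall fun x => ?_
    rw [norm_mul, RCLike.norm_conj]
    nlinarith [sq_nonneg (‖χ x‖ - ‖u t x‖), sq_nonneg ‖χ x‖, sq_nonneg ‖u t x‖]
  have m2 : AEStronglyMeasurable (fun x => (Complex.I * (Δ (u t)) x) * (starRingEnd ℂ) (χ x)) (volume : Measure (Ed d)) :=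
    ((continuous_const.mul (Δ (u t)).continuous).mul hχ).aestronglyMeasurable
  have b1 : ∀ᵐ x ∂(volume : Measure (Ed d)), ∀ s ∈ Metric.ball t 1,
      ‖(Complex.I * (Δ (u s)) x) * (starRingEnd ℂ) (χ x)‖ ≤ C * ‖χ x‖ := by
    refine Eventually.of_forall fun x s hs => ?_
    rw [norm_mul, RCLike.norm_conj]
    by_cases hx : x ∈ tsupport χ
    · refine mul_le_mul_of_nonneg_right ?_ (norm_nonneg _)
      refine hC (s, x) ⟨?_, hx⟩
      rw [Metric.mem_ball, Real.dist_eq, abs_lt] at hs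
      exact ⟨by linarith, by linarith⟩
    · rw [image_eq_zero_of_notMem_tsupport hx, norm_zero, mul_zero, mul_zero]
  have i2 : Integrable (fun x => C * ‖χ x‖) := χ.integrable.norm.const_mul C
  have d1 : ∀ᵐ x ∂(volume : Measure (Ed d)), ∀ s ∈ Metric.ball t 1,
      HasDerivAt (fun s => u s x * (starRingEnd ℂ) (χ x)) ((Complex.I * (Δ (u s)) x) * (starRingEnd ℂ) (χ x)) s :=
    Eventually.of_forall fun x s _ => (sol_hasDerivAt hu s x).mul_const _
  exact (hasDerivAt_integral_of_dominated_loc_of_deriv_le 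
    (Metric.ball_mem_nhds t one_pos) (Eventually.of_forall m1) i1 m2 b1 i2 d1).2

lemma norm_prn_le {d : ℕ} (u : ℝ → 𝓢(Ed d, ℂ)) (ψ : 𝓢(Ed d, ℂ)) (t : ℝ) (N : ℝ) (h : ‖(u t).toLp 2‖ ≤ N) :
    ‖prn u ψ t‖ ≤ N * ‖ψ.toLp 2‖ := by
  rw [mul_comm]
  exact (norm_inner_le_norm _ _).trans (mul_le_mul_of_nonneg_left h (norm_nonneg _))

lemma toLp_sub' {d : ℕ} (f g : 𝓢(Ed d, ℂ)) : (f - g).toLp 2 volume = f.toLp 2 volume - g.toLp 2 volume :=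
  (toLpCLM ℂ ℂ 2 (volume : Measure (Ed d))).map_sub f g

lemma toLp_smul' {d : ℕ} (c : ℂ) (f : 𝓢(Ed d, ℂ)) : (c • f).toLp 2 volume = c • f.toLp 2 volume :=
  (toLpCLM ℂ ℂ 2 (volume : Measure (Ed d))).map_smul c f

lemma prn_sub {d : ℕ} (u : ℝ → 𝓢(Ed d, ℂ)) (f g : 𝓢(Ed d, ℂ)) (t : ℝ) :
    prn u (f - g) t = prn u f t - prn u g t := by
  unfold prn; rw [toLp_sub', inner_sub_left]

lemma prn_smul {d : ℕ} (u : ℝ → 𝓢(Ed d, ℂ)) (c : ℂ) (f : 𝓢(Ed d, ℂ)) (t : ℝ) :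
    prn u (c • f) t = (starRingEnd ℂ) c * prn u f t := by
  unfold prn; rw [toLp_smul', inner_smul_left]

lemma tendsto_prn {d : ℕ} (u : ℝ → 𝓢(Ed d, ℂ)) (ψn : ℕ → 𝓢(Ed d, ℂ)) (ψ : 𝓢(Ed d, ℂ)) (t : ℝ)
    (h : Tendsto (fun n => ‖(ψn n - ψ).toLp 2‖) atTop (𝓝 0)) :
    Tendsto (fun n => prn u (ψn n) t) atTop (𝓝 (prn u ψ t)) := by
  rw [tendsto_iff_norm_sub_tendsto_zero]
  have h2 := h.const_mul (‖(u t).toLp 2‖)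
  rw [mul_zero] at h2
  refine squeeze_zero (fun _ => norm_nonneg _) (fun n => ?_) h2
  rw [← prn_sub]
  exact norm_prn_le u _ t _ le_rfl

lemma prn_lipschitz {d : ℕ} {u : ℝ → 𝓢(Ed d, ℂ)} (hu : IsLinSchrodSol d u)
    {J : Set ℝ} (hJ : Convex ℝ J) {N : ℝ} (hN : ∀ r ∈ J, ‖(u r).toLp 2‖ ≤ N)
    (ψ : 𝓢(Ed d, ℂ)) {s t : ℝ} (hs : s ∈ J) (ht : t ∈ J) :
    ‖prn u ψ t - prn u ψ s‖ ≤ N * ‖(Δ ψ).toLp 2‖ * |t - s| := by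
  obtain ⟨ψn, hc, h0, h2⟩ := exists_cutoff ψ
  have hN0 : 0 ≤ N := (norm_nonneg _).trans (hN s hs)
  have key : ∀ n, ‖prn u (ψn n) t - prn u (ψn n) s‖ ≤
      N * (‖(Δ (ψn n) - Δ ψ).toLp 2‖ + ‖(Δ ψ).toLp 2‖) * |t - s| := by
    intro n
    refine hJ.norm_image_sub_le_of_norm_hasDerivWithin_le
      (fun r hr => (hasDerivAt_prn hu (ψn n) (hc n) r).hasDerivWithinAt) (fun r hr => ?_) hs ht
    rw [norm_mul, Complex.norm_I, one_mul]
    refine (norm_prn_le u _ r N (hN r hr)).trans (mul_le_mul_of_nonneg_left ?_ hN0)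
    rw [toLp_sub']
    exact norm_le_norm_sub_add _ _
  have hl := ((tendsto_prn u ψn ψ t h0).sub (tendsto_prn u ψn ψ s h0)).norm
  have hr := (((h2.add_const ‖(Δ ψ).toLp 2‖).const_mul N).mul_const |t - s|)
  rw [zero_add] at hr
  exact le_of_tendsto_of_tendsto' hl hr key

lemma prn_taylor {d : ℕ} {u : ℝ → 𝓢(Ed d, ℂ)} (hu : IsLinSchrodSol d u)
    {J : Set ℝ} (hJ : Convex ℝ J) {N : ℝ} (hN : ∀ r ∈ J, ‖(u r).toLp 2‖ ≤ N)
    (ψ : 𝓢(Ed d, ℂ)) {s t : ℝ} (hs : s ∈ J) (ht : t ∈ J) :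
    ‖prn u ψ t - prn u ψ s - (t - s) * (Complex.I * prn u (Δ ψ) s)‖
      ≤ N * ‖(Δ (Δ ψ)).toLp 2‖ * (t - s) ^ 2 := by
  obtain ⟨ψn, hc, h0, h2⟩ := exists_cutoff ψ
  have hN0 : 0 ≤ N := (norm_nonneg _).trans (hN s hs)
  have hsub : segment ℝ s t ⊆ J := hJ.segment_subset hs ht
  have key : ∀ n, ‖(prn u (ψn n) t - t * (Complex.I * prn u (Δ ψ) s)) -
        (prn u (ψn n) s - s * (Complex.I * prn u (Δ ψ) s))‖ ≤
      (N * ‖(Δ (ψn n) - Δ ψ).toLp 2‖ + N * ‖(Δ (Δ ψ)).toLp 2‖ * |t - s|) * |t - s| := by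
    intro n
    refine (convex_segment s t).norm_image_sub_le_of_norm_hasDerivWithin_le
      (f := fun r : ℝ => prn u (ψn n) r - r * (Complex.I * prn u (Δ ψ) s))
      (f' := fun r : ℝ => Complex.I * prn u (Δ (ψn n)) r - 1 * (Complex.I * prn u (Δ ψ) s))
      (fun r hr => ?_) (fun r hr => ?_) (left_mem_segment ℝ s t) (right_mem_segment ℝ s t)
    · refine HasDerivAt.hasDerivWithinAt ?_
      refine (hasDerivAt_prn hu (ψn n) (hc n) r).sub ?_
      exact (Complex.ofRealCLM.hasDerivAt (x := r)).mul_const _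
    · have e : Complex.I * prn u (Δ (ψn n)) r - 1 * (Complex.I * prn u (Δ ψ) s)
        = Complex.I * (prn u (Δ (ψn n) - Δ ψ) r + (prn u (Δ ψ) r - prn u (Δ ψ) s)) := by
        rw [prn_sub]; ring
      rw [e, norm_mul, Complex.norm_I, one_mul]
      refine (norm_add_le _ _).trans (add_le_add (norm_prn_le u _ r N (hN r (hsub hr))) ?_)
      refine (prn_lipschitz hu hJ hN (Δ ψ) hs (hsub hr)).trans ?_
      refine mul_le_mul_of_nonneg_left ?_ (by positivity)
      rw [segment_eq_uIcc] at hr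
      exact Set.abs_sub_left_of_mem_uIcc hr
  have hl := (((tendsto_prn u ψn ψ t h0).sub_const (t * (Complex.I * prn u (Δ ψ) s))).sub
    ((tendsto_prn u ψn ψ s h0).sub_const (s * (Complex.I * prn u (Δ ψ) s)))).norm
  have hr := (((h2.const_mul N).add_const (N * ‖(Δ (Δ ψ)).toLp 2‖ * |t - s|)).mul_const |t - s|)
  have := le_of_tendsto_of_tendsto' hl hr key
  rw [mul_zero, zero_add, mul_assoc, abs_mul_abs_self, ← sq] at this
  refine le_of_eq_of_le ?_ this
  congr 1
  ring

lemma hasDerivWithinAt_of_sq {F : Type*} [NormedAddCommGroup F] [NormedSpace ℝ F] (f : ℝ → F) (f' : F)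
    (s : Set ℝ) (t K : ℝ) (h : ∀ r ∈ s, ‖f r - f t - (r - t) • f'‖ ≤ K * (r - t) ^ 2) :
    HasDerivWithinAt f f' s t := by
  rw [hasDerivWithinAt_iff_isLittleO]
  have h1 : (fun r => f r - f t - (r - t) • f') =O[𝓝[s] t] (fun r => (r - t) ^ 2) := by
    apply Asymptotics.IsBigO.of_bound K
    filter_upwards [self_mem_nhdsWithin] with r hr
    simpa using h r hr
  refine h1.trans_isLittleO ?_
  have h2 : (fun r : ℝ => (r - t) ^ 2) =o[𝓝 t] (fun r => r - t) := by
    have h3 : Tendsto (fun r : ℝ => r - t) (𝓝 t) (𝓝 0) := by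
      have : Continuous (fun r : ℝ => r - t) := by fun_prop
      simpa using this.tendsto t
    exact (Asymptotics.isLittleO_pow_id (one_lt_two)).comp_tendsto h3
  exact h2.mono nhdsWithin_le_nhds

/-- The free flow relation between times `s` and `t`. -/
def FlowRel {d : ℕ} (u : ℝ → 𝓢(Ed d, ℂ)) (s t : ℝ) : Prop :=
  ∀ ξ, 𝓕 (u t) ξ = mm (t - s) ξ * 𝓕 (u s) ξ

lemma FlowRel.refl {d : ℕ} (u : ℝ → 𝓢(Ed d, ℂ)) (s : ℝ) : FlowRel u s s := by
  intro ξ; rw [sub_self, mm_zero, one_mul]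

lemma FlowRel.symm {d : ℕ} {u : ℝ → 𝓢(Ed d, ℂ)} {s t : ℝ} (h : FlowRel u s t) : FlowRel u t s := by
  intro ξ
  rw [h ξ, ← mul_assoc, ← mm_add, show s - t + (t - s) = 0 by ring, mm_zero, one_mul]

lemma FlowRel.trans {d : ℕ} {u : ℝ → 𝓢(Ed d, ℂ)} {s t r : ℝ} (h : FlowRel u s t) (h' : FlowRel u t r) :
    FlowRel u s r := by
  intro ξ
  rw [h' ξ, h ξ, ← mul_assoc, ← mm_add]
  congr 2; ring

lemma FlowRel.norm_eq {d : ℕ} {u : ℝ → 𝓢(Ed d, ℂ)} {s t : ℝ} (h : FlowRel u s t) :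
    ‖(u t).toLp 2‖ ≤ ‖(u s).toLp 2‖ := by
  rw [← norm_fourier_toL2_eq, ← norm_fourier_toL2_eq (u s)]
  have := norm_toLp_le_of (𝓕 (u t)) (𝓕 (u s)) 1 zero_le_one (fun ξ => by rw [h ξ, norm_mul, norm_mm])
  simpa using this

/-- the free evolution of a compactly supported frequency profile -/
lemma exists_free {d : ℕ} (g : Ed d → ℝ) (hg : ContDiff ℝ ∞ g) (hc : HasCompactSupport g) :
    ∃ ψ : ℝ → 𝓢(Ed d, ℂ), ∀ t ξ, 𝓕 (ψ t) ξ = mm t ξ * g ξ := by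
  have h1 : ∀ t, ContDiff ℝ ∞ (fun ξ => mm t ξ * (g ξ : ℂ)) := fun t =>
    (contDiff_mm t).mul (Complex.ofRealCLM.contDiff.comp hg)
  have h2 : ∀ t, HasCompactSupport (fun ξ => mm t ξ * (g ξ : ℂ)) := fun t =>
    (hc.comp_left (g := fun r : ℝ => (r : ℂ)) (by simp)).mul_left
  refine ⟨fun t => 𝓕⁻ ((h2 t).toSchwartzMap (h1 t)), fun t ξ => ?_⟩
  rw [FourierTransform.fourier_fourierInv_eq]
  rfl

lemma fourier_sub' {d : ℕ} (f g : 𝓢(Ed d, ℂ)) (ξ : Ed d) : 𝓕 (f - g) ξ = 𝓕 f ξ - 𝓕 g ξ := by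
  rw [sub_eq_add_neg, FourierTransform.fourier_add, FourierTransform.fourier_neg, ← sub_eq_add_neg,
    _root_.sub_apply]

/-- second order Taylor estimate for the free flow -/
lemma flow_taylor {d : ℕ} (f g : 𝓢(Ed d, ℂ)) (h : ℝ) (hfg : ∀ ξ, 𝓕 g ξ = mm h ξ * 𝓕 f ξ) :
    ‖(g - f - ((h : ℂ) * Complex.I) • Δ f).toLp 2 volume‖ ≤ 3 * h ^ 2 * ‖(Δ (Δ f)).toLp 2 volume‖ := by
  rw [← norm_fourier_toL2_eq, ← norm_fourier_toL2_eq (Δ (Δ f))]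
  refine norm_toLp_le_of _ _ _ (by positivity) fun ξ => ?_
  have e : 𝓕 (g - f - ((h : ℂ) * Complex.I) • Δ f) ξ = (mm h ξ - 1 - (h : ℂ) * (Complex.I * (-(((2 * Real.pi) ^ 2 * ‖ξ‖ ^ 2 : ℝ) : ℂ)))) * 𝓕 f ξ := by
    rw [fourier_sub', fourier_sub', FourierTransform.fourier_smul]
    rw [_root_.smul_apply, fourier_lap, hfg, smul_eq_mul]
    ring
  have e2 : ‖𝓕 (Δ (Δ f)) ξ‖ = ((2 * Real.pi) ^ 2 * ‖ξ‖ ^ 2) ^ 2 * ‖𝓕 f ξ‖ := by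
    rw [fourier_lap, fourier_lap, norm_mul, norm_mul, norm_neg, Complex.norm_real, Real.norm_of_nonneg (by positivity)]
    ring
  rw [e, e2, norm_mul, ← mul_assoc (3 * h ^ 2)]
  exact mul_le_mul_of_nonneg_right (mm_taylor h ξ) (norm_nonneg (𝓕 f ξ))

lemma norm_lap_lap_flow {d : ℕ} (f g : 𝓢(Ed d, ℂ)) (h : ℝ) (hfg : ∀ ξ, 𝓕 g ξ = mm h ξ * 𝓕 f ξ) :
    ‖(Δ (Δ g)).toLp 2 volume‖ ≤ ‖(Δ (Δ f)).toLp 2 volume‖ := by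
  rw [← norm_fourier_toL2_eq, ← norm_fourier_toL2_eq (Δ (Δ f))]
  have := norm_toLp_le_of (𝓕 (Δ (Δ g))) (𝓕 (Δ (Δ f))) 1 zero_le_one (fun ξ => by
    rw [fourier_lap, fourier_lap, fourier_lap, fourier_lap, hfg]
    simp only [norm_mul, norm_mm, one_mul, le_refl])
  rwa [one_mul] at this

lemma prn_flow_sq {d : ℕ} {u : ℝ → 𝓢(Ed d, ℂ)} (hu : IsLinSchrodSol d u)
    {J : Set ℝ} (hJ : Convex ℝ J) {N : ℝ} (hN : ∀ r ∈ J, ‖(u r).toLp 2 volume‖ ≤ N)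
    (f g : 𝓢(Ed d, ℂ)) {r q : ℝ} (hr : r ∈ J) (hq : q ∈ J) (hfg : ∀ ξ, 𝓕 g ξ = mm (q - r) ξ * 𝓕 f ξ)
    (D : ℝ) (hD : ‖(Δ (Δ f)).toLp 2 volume‖ ≤ D) :
    ‖prn u g q - prn u f r‖ ≤ 5 * N * D * (q - r) ^ 2 := by
  have hN0 : 0 ≤ N := le_trans (norm_nonneg _) (hN r hr)
  have hD0 : 0 ≤ D := le_trans (norm_nonneg _) hD
  have hwn := flow_taylor f g (q - r) hfg
  set w : 𝓢(Ed d, ℂ) := g - f - (((q - r : ℝ) : ℂ) * Complex.I : ℂ) • Δ f with hw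
  have e : prn u g q - prn u f r = prn u w q +
      (prn u f q - prn u f r - (q - r) * (Complex.I * prn u (Δ f) r)) -
      ((q - r : ℝ) * Complex.I : ℂ) * (prn u (Δ f) q - prn u (Δ f) r) := by
    rw [hw, prn_sub, prn_sub, prn_smul]
    simp only [map_mul, Complex.conj_ofReal, Complex.conj_I]
    push_cast
    ring
  rw [e]
  have b1 := norm_prn_le u w q N (hN q hq)
  have b2 := prn_taylor hu hJ hN f hr hq
  have b3 := prn_lipschitz hu hJ hN (Δ f) hr hq
  generalize ‖(Δ (Δ f)).toLp 2 volume‖ = D' at *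
  have b3' : ‖((q - r : ℝ) * Complex.I : ℂ) * (prn u (Δ f) q - prn u (Δ f) r)‖ ≤ N * D * (q - r) ^ 2 := by
    rw [norm_mul, norm_mul, Complex.norm_I, mul_one, Complex.norm_real, Real.norm_eq_abs]
    refine (mul_le_mul_of_nonneg_left b3 (abs_nonneg _)).trans ?_
    rw [show |q - r| * (N * D' * |q - r|) = N * D' * (q - r) ^ 2 by rw [← sq_abs (q - r)]; ring]
    gcongr
  have b1' : ‖prn u w q‖ ≤ 3 * N * D * (q - r) ^ 2 := by
    refine b1.trans ((mul_le_mul_of_nonneg_left hwn hN0).trans ?_)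
    rw [show N * (3 * (q - r) ^ 2 * D') = 3 * N * D' * (q - r) ^ 2 by ring]
    gcongr
  have b2' : ‖prn u f q - prn u f r - (q - r) * (Complex.I * prn u (Δ f) r)‖ ≤ N * D * (q - r) ^ 2 :=
    b2.trans (by gcongr)
  refine (norm_sub_le _ _).trans ?_
  have := norm_add_le (prn u w q) (prn u f q - prn u f r - (q - r) * (Complex.I * prn u (Δ f) r))
  linarith

lemma flowRel_of_bounded {d : ℕ} {u : ℝ → 𝓢(Ed d, ℂ)} (hu : IsLinSchrodSol d u)
    {J : Set ℝ} (hJ : Convex ℝ J) {N : ℝ} (hN : ∀ r ∈ J, ‖(u r).toLp 2‖ ≤ N)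
    {s t : ℝ} (hs : s ∈ J) (ht : t ∈ J) : FlowRel u s t := by
  have hN0 : 0 ≤ N := (norm_nonneg _).trans (hN s hs)
  have main : ∀ g : Ed d → ℝ, ContDiff ℝ ∞ g → HasCompactSupport g →
      ∫ ξ, g ξ • (mm (-t) ξ * 𝓕 (u t) ξ - mm (-s) ξ * 𝓕 (u s) ξ) = 0 := by
    intro g hg hgc
    obtain ⟨ψ, hψ⟩ := exists_free g hg hgc
    let D : ℝ := ‖(Δ (Δ (ψ 0))).toLp 2 volume‖
    have hfl : ∀ r q ξ, 𝓕 (ψ q) ξ = mm (q - r) ξ * 𝓕 (ψ r) ξ := by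
      intro r q ξ
      rw [hψ, hψ, ← mul_assoc, ← mm_add, sub_add_cancel]
    have hB : ∀ r ∈ J, ∀ q ∈ J, ‖prn u (ψ q) q - prn u (ψ r) r‖ ≤ 5 * N * D * (q - r) ^ 2 :=
      fun r hr q hq => prn_flow_sq hu hJ hN (ψ r) (ψ q) hr hq (hfl r q) D
        (norm_lap_lap_flow (ψ 0) (ψ r) (r - 0) (hfl 0 r))
    have hconst : prn u (ψ t) t = prn u (ψ s) s := by
      have := hJ.norm_image_sub_le_of_norm_hasDerivWithin_le (f := fun r => prn u (ψ r) r) (f' := fun _ => 0) (C := 0)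
        (fun r hr => hasDerivWithinAt_of_sq _ _ J r (5 * N * D) (fun q hq => by simpa using hB r hr q hq))
        (fun r hr => by simp) hs ht
      rw [zero_mul, norm_le_zero_iff, sub_eq_zero] at this
      exact this
    have hpr : ∀ r, prn u (ψ r) r = ∫ ξ, g ξ • (mm (-r) ξ * 𝓕 (u r) ξ) := by
      intro r
      unfold prn
      rw [← inner_fourier_toL2_eq, inner_toL2_toL2_eq _ _ volume]
      congr 1; ext ξ
      rw [hψ, RCLike.inner_apply, map_mul, Complex.conj_ofReal, Complex.real_smul]
      have : (starRingEnd ℂ) (mm r ξ) = mm (-r) ξ := by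
        unfold mm
        rw [← Complex.exp_conj]
        congr 1
        simp only [map_mul, map_neg, Complex.conj_ofReal, Complex.conj_I]
        push_cast; ring
      rw [this]; ring
    have hint : ∀ r, Integrable (fun ξ => g ξ • (mm (-r) ξ * 𝓕 (u r) ξ)) := by
      intro r
      apply Continuous.integrable_of_hasCompactSupport
      · exact hg.continuous.smul ((contDiff_mm (-r)).continuous.mul (𝓕 (u r)).continuous)
      · exact hgc.smul_right
    simp only [smul_sub]
    rw [integral_sub (hint t) (hint s), ← hpr, ← hpr, hconst, sub_self]
  have hcont : ∀ r, Continuous (fun ξ => mm (-r) ξ * 𝓕 (u r) ξ) := fun r =>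
    (contDiff_mm (-r)).continuous.mul (𝓕 (u r)).continuous
  have hae := ae_eq_zero_of_integral_contDiff_smul_eq_zero
    ((hcont t).sub (hcont s)).locallyIntegrable main
  have heq := (Continuous.ae_eq_iff_eq volume ((hcont t).sub (hcont s)) continuous_const).1 hae
  intro ξ
  have h1 : mm (-t) ξ * 𝓕 (u t) ξ - mm (-s) ξ * 𝓕 (u s) ξ = 0 := congrFun heq ξ
  have h2 : mm t ξ * mm (-t) ξ = 1 := by rw [← mm_add, add_neg_cancel, mm_zero]
  rw [sub_eq_add_neg, mm_add]
  calc 𝓕 (u t) ξ = (mm t ξ * mm (-t) ξ) * 𝓕 (u t) ξ := by rw [h2, one_mul]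
    _ = _ := by linear_combination (mm t ξ) * h1

lemma isClosed_flowRel {d : ℕ} {u : ℝ → 𝓢(Ed d, ℂ)} (hu : IsLinSchrodSol d u) (s : ℝ) :
    IsClosed {t | FlowRel u s t} := by
  apply IsSeqClosed.isClosed
  intro tn t htn htlim
  have htn : ∀ n, FlowRel u s (tn n) := htn
  let G : Ed d → ℂ := fun ξ => mm (t - s) ξ * 𝓕 (u s) ξ
  have hGc : Continuous G := (contDiff_mm _).continuous.mul (𝓕 (u s)).continuous
  have hGi : Integrable G := by
    refine Integrable.mono' (𝓕 (u s)).integrable.norm hGc.aestronglyMeasurable (Eventually.of_forall fun ξ => ?_)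
    simp [G, norm_mm]
  have hinv : 𝓕⁻ G = u t := by
    ext x
    have h1 : Tendsto (fun n => u (tn n) x) atTop (𝓝 (u t x)) := by
      have hc : Continuous (fun r => u r x) :=
        hu.1.continuous.comp (f := fun r : ℝ => (r, x)) (by fun_prop)
      exact (hc.tendsto t).comp htlim
    have h2 : Tendsto (fun n => u (tn n) x) atTop (𝓝 (𝓕⁻ G x)) := by
      have e : ∀ n, u (tn n) x = ∫ ξ, Real.fourierChar (inner ℝ ξ x) • (mm (tn n - s) ξ * 𝓕 (u s) ξ) := by
        intro n
        have h3 : 𝓕⁻ (𝓕 (u (tn n))) x = u (tn n) x := by rw [FourierTransform.fourierInv_fourier_eq]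
        rw [← h3, fourierInv_coe, Real.fourierInv_eq]
        congr 1; ext ξ
        rw [htn n ξ]
      simp_rw [e]
      rw [Real.fourierInv_eq]
      apply tendsto_integral_of_dominated_convergence (fun ξ => ‖𝓕 (u s) ξ‖)
      · intro n
        refine Continuous.aestronglyMeasurable ?_
        refine Continuous.smul (M := Circle) ?_ ((contDiff_mm _).continuous.mul (𝓕 (u s)).continuous)
        exact Real.continuous_fourierChar.comp (by fun_prop)
      · exact (𝓕 (u s)).integrable.norm
      · intro n
        refine Eventually.of_forall fun ξ => ?_
        rw [Circle.norm_smul, norm_mul, norm_mm, one_mul]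
      · refine Eventually.of_forall fun ξ => ?_
        refine Tendsto.const_smul ?_ _
        refine Tendsto.mul_const _ ?_
        have hc : Continuous (fun r : ℝ => mm (r - s) ξ) := by unfold mm; fun_prop
        exact (hc.tendsto t).comp htlim
    exact tendsto_nhds_unique h2 h1
  have hF : 𝓕 (𝓕⁻ G) = G := by
    apply Continuous.fourier_fourierInv_eq hGc hGi
    have e : 𝓕 G = fun x => u t (-x) := by
      ext x
      rw [← hinv, Real.fourierInv_eq_fourier_neg, neg_neg]
    rw [e]
    exact (u t).integrable.comp_neg
  intro ξ
  rw [fourier_coe, ← hinv, hF]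

lemma isClosed_bdd {d : ℕ} {u : ℝ → 𝓢(Ed d, ℂ)} (hu : IsLinSchrodSol d u) (N : ℕ) :
    IsClosed {t | ‖(u t).toLp 2 volume‖ ≤ (N : ℝ)} := by
  have hset : {t | ‖(u t).toLp 2 volume‖ ≤ (N : ℝ)} = {t | eLpNorm (u t) 2 volume ≤ ENNReal.ofReal (N : ℝ)} := by
    ext t
    simp only [Set.mem_ofPred_eq]
    rw [norm_toLp, ENNReal.le_ofReal_iff_toReal_le ((u t).memLp 2 volume).eLpNorm_ne_top (by positivity)]
  rw [hset]
  apply IsSeqClosed.isClosed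
  intro tn t htn htlim
  have h := Lp.eLpNorm_lim_le_liminf_eLpNorm (p := 2) (μ := (volume : Measure (Ed d))) (f := fun n => ⇑(u (tn n)))
    (fun n => (u (tn n)).continuous.aestronglyMeasurable) (u t) (Eventually.of_forall fun x => by
      have hc : Continuous (fun r => u r x) :=
        hu.1.continuous.comp (f := fun r : ℝ => (r, x)) (by fun_prop)
      exact (hc.tendsto t).comp htlim)
  refine h.trans ?_
  refine (liminf_le_liminf (v := fun _ => ENNReal.ofReal (N : ℝ)) (Eventually.of_forall htn)).trans ?_
  simp

/-- times near which the free flow relation holds -/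
def GoodT {d : ℕ} (u : ℝ → 𝓢(Ed d, ℂ)) : Set ℝ := {r | ∀ᶠ r' in 𝓝 r, FlowRel u r r'}

lemma isOpen_goodT {d : ℕ} (u : ℝ → 𝓢(Ed d, ℂ)) : IsOpen (GoodT u) := by
  rw [isOpen_iff_mem_nhds]
  intro r hr
  have h1 : ∀ᶠ r' in 𝓝 r, FlowRel u r r' := hr
  filter_upwards [h1, h1.eventually_nhds] with q hq hq'
  filter_upwards [hq'] with z hz
  exact hq.symm.trans hz

lemma flow_preconn {d : ℕ} {u : ℝ → 𝓢(Ed d, ℂ)} (hu : IsLinSchrodSol d u) {S : Set ℝ}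
    (hS : IsPreconnected S) (hSO : S ⊆ GoodT u) {t : ℝ} (ht : t ∈ S) {r : ℝ} (hr : r ∈ closure S) :
    FlowRel u t r := by
  have hT := isClosed_flowRel hu t
  have key : S ⊆ interior {r | FlowRel u t r} := by
    apply hS.subset_of_closure_inter_subset isOpen_interior
    · refine ⟨t, ht, ?_⟩
      rw [mem_interior_iff_mem_nhds]
      exact hSO ht
    · rintro q ⟨hq, hqS⟩
      have h1 : FlowRel u t q := (closure_minimal interior_subset hT) hq
      have h2 : ∀ᶠ r' in 𝓝 q, FlowRel u q r' := hSO hqS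
      rw [mem_interior_iff_mem_nhds]
      filter_upwards [h2] with z hz
      exact h1.trans hz
  exact (closure_minimal (key.trans interior_subset) hT) hr

lemma goodT_univ {d : ℕ} {u : ℝ → 𝓢(Ed d, ℂ)} (hu : IsLinSchrodSol d u) : GoodT u = Set.univ := by
  by_contra hne
  have hKc : IsClosed (GoodT u)ᶜ := (isOpen_goodT u).isClosed_compl
  have hKne : ((GoodT u)ᶜ).Nonempty := by rwa [Set.nonempty_compl]
  have : CompleteSpace ↥(GoodT u)ᶜ := hKc.completeSpace_coe
  have : Nonempty ↥(GoodT u)ᶜ := hKne.to_subtype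
  obtain ⟨N, ⟨p, hp⟩, hpN⟩ := nonempty_interior_of_iUnion_of_closed
    (f := fun N : ℕ => {k : ↥(GoodT u)ᶜ | ‖(u k).toLp 2 volume‖ ≤ (N : ℝ)})
    (fun N => (isClosed_bdd hu N).preimage continuous_subtype_val)
    (by
      ext k
      simp only [Set.mem_iUnion, Set.mem_ofPred_eq, Set.mem_univ, iff_true]
      exact exists_nat_ge _)
  rw [mem_interior_iff_mem_nhds, Metric.mem_nhds_iff] at hpN
  obtain ⟨ε, hε, hball⟩ := hpN
  have hK : ∀ r ∈ Set.Ioo (p - ε) (p + ε), r ∉ GoodT u → ‖(u r).toLp 2 volume‖ ≤ (N : ℝ) := by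
    intro r hr hrK
    have : (⟨r, hrK⟩ : ↥(GoodT u)ᶜ) ∈ Metric.ball (⟨p, hp⟩ : ↥(GoodT u)ᶜ) ε := by
      rw [Metric.mem_ball, Subtype.dist_eq, Real.dist_eq, abs_lt]
      constructor <;> linarith [hr.1, hr.2]
    have h3 := hball this
    rw [Set.mem_ofPred_eq] at h3
    exact h3
  have hbd : ∀ t ∈ Set.Ioo (p - ε) (p + ε), ‖(u t).toLp 2 volume‖ ≤ (N : ℝ) := by
    intro t ht
    by_cases htO : t ∉ GoodT u
    · exact hK t ht htO
    push Not at htO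
    rcases lt_trichotomy t p with h | h | h
    · obtain ⟨a, ⟨haK, hat, hap⟩, hmin⟩ := (IsCompact.inter_left (isCompact_Icc (a := t) (b := p)) hKc).exists_isLeast
        ⟨p, hp, h.le, le_rfl⟩
      have hta : t < a := lt_of_le_of_ne hat (fun e => haK (e ▸ htO))
      have hS : Set.Ico t a ⊆ GoodT u := by
        intro q hq
        by_contra hqK
        exact absurd (hmin ⟨hqK, hq.1, hq.2.le.trans hap⟩) (not_le.2 hq.2)
      have hf : FlowRel u t a := flow_preconn hu isPreconnected_Ico hS ⟨le_rfl, hta⟩ (by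
        rw [closure_Ico hta.ne]; exact ⟨hta.le, le_rfl⟩)
      exact hf.symm.norm_eq.trans (hK a ⟨by linarith [ht.1], by linarith⟩ haK)
    · exact absurd (h ▸ htO) hp
    · obtain ⟨a, ⟨haK, hpa, hat⟩, hmax⟩ := (IsCompact.inter_left (isCompact_Icc (a := p) (b := t)) hKc).exists_isGreatest
        ⟨p, hp, le_rfl, h.le⟩
      have hta : a < t := lt_of_le_of_ne hat (fun e => haK (e ▸ htO))
      have hS : Set.Ioc a t ⊆ GoodT u := by
        intro q hq
        by_contra hqK
        exact absurd (hmax ⟨hqK, hpa.trans hq.1.le, hq.2⟩) (not_le.2 hq.1)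
      have hf : FlowRel u t a := flow_preconn hu isPreconnected_Ioc hS ⟨hta, le_rfl⟩ (by
        rw [closure_Ioc hta.ne]; exact ⟨le_rfl, hta.le⟩)
      exact hf.symm.norm_eq.trans (hK a ⟨by linarith, by linarith [ht.2]⟩ haK)
  apply hp
  have hpI : p ∈ Set.Ioo (p - ε) (p + ε) := ⟨by linarith, by linarith⟩
  have : ∀ᶠ r' in 𝓝 p, FlowRel u p r' := by
    filter_upwards [Ioo_mem_nhds hpI.1 hpI.2] with q hq
    exact flowRel_of_bounded hu (convex_Ioo _ _) hbd hpI hq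
  exact this

lemma flowRel_all {d : ℕ} {u : ℝ → 𝓢(Ed d, ℂ)} (hu : IsLinSchrodSol d u) (s t : ℝ) : FlowRel u s t :=
  flow_preconn hu isPreconnected_univ (by rw [goodT_univ hu]) (Set.mem_univ s) (by simp)

/-- second order estimate for the solution in `L²` -/
lemma sol_taylor {d : ℕ} {u : ℝ → 𝓢(Ed d, ℂ)} (hu : IsLinSchrodSol d u) (t s : ℝ) :
    ‖(u s - u t - (((s - t : ℝ) : ℂ) * Complex.I) • Δ (u t)).toLp 2 volume‖ ≤
      3 * (s - t) ^ 2 * ‖(Δ (Δ (u t))).toLp 2 volume‖ :=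
  flow_taylor (u t) (u s) (s - t) (flowRel_all hu t s)

lemma pd_eq {d : ℕ} (g : 𝓢(Ed d, ℂ)) (i : Fin d) : pd (⇑g) i = ⇑(∂_{stdBasis i} g : 𝓢(Ed d, ℂ)) := by
  ext y
  rw [lineDerivOp_apply_eq_fderiv]
  rfl

lemma integrable_bdd_mul_mul {d : ℕ} (ψ : Ed d → ℂ) (hψ : Continuous ψ) (C : ℝ) (hC : ∀ x, ‖ψ x‖ ≤ C)
    (f g : 𝓢(Ed d, ℂ)) : Integrable (fun x => ψ x * ((starRingEnd ℂ) (f x) * g x)) := by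
  refine Integrable.bdd_mul (c := C) ?_ hψ.aestronglyMeasurable (Eventually.of_forall hC)
  refine Integrable.bdd_mul (c := SchwartzMap.seminorm ℝ 0 0 f) g.integrable ?_ (Eventually.of_forall fun x => ?_)
  · exact (Complex.continuous_conj.comp f.continuous).aestronglyMeasurable
  · rw [RCLike.norm_conj]; exact norm_le_seminorm ℝ f x

lemma ibp_one {d : ℕ} (φ : Ed d → ℝ) (hφ : ContDiff ℝ 1 φ) (C C' : ℝ) (hC : ∀ x, |φ x| ≤ C)
    (hC' : ∀ x, ‖fderiv ℝ φ x‖ ≤ C') (a b : 𝓢(Ed d, ℂ)) (v : Ed d) :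
    ∫ x, (φ x : ℂ) ^ 2 * ((starRingEnd ℂ) (a x) * (∂_{v} b : 𝓢(Ed d, ℂ)) x) =
      - (2 * ∫ x, ((φ x : ℂ) * (fderiv ℝ φ x v : ℝ)) * ((starRingEnd ℂ) (a x) * b x))
      - ∫ x, (φ x : ℂ) ^ 2 * ((starRingEnd ℂ) ((∂_{v} a : 𝓢(Ed d, ℂ)) x) * b x) := by
  have hC0 : 0 ≤ C := (abs_nonneg _).trans (hC 0)
  have hC0' : 0 ≤ C' := (norm_nonneg _).trans (hC' 0)
  have c1 : Continuous (fun x => (φ x : ℂ) ^ 2) := (Complex.continuous_ofReal.comp hφ.continuous).pow 2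
  have c2 : Continuous (fun x => (φ x : ℂ) * (fderiv ℝ φ x v : ℝ)) :=
    (Complex.continuous_ofReal.comp hφ.continuous).mul
      (Complex.continuous_ofReal.comp ((hφ.continuous_fderiv (by simp)).clm_apply continuous_const))
  have b1 : ∀ x, ‖(φ x : ℂ) ^ 2‖ ≤ C ^ 2 := by
    intro x
    rw [norm_pow, Complex.norm_real, Real.norm_eq_abs]
    exact pow_le_pow_left₀ (abs_nonneg _) (hC x) 2
  have b2 : ∀ x, ‖(φ x : ℂ) * (fderiv ℝ φ x v : ℝ)‖ ≤ C * (C' * ‖v‖) := by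
    intro x
    rw [norm_mul, Complex.norm_real, Complex.norm_real, Real.norm_eq_abs]
    refine mul_le_mul (hC x) ?_ (norm_nonneg _) hC0
    exact (ContinuousLinearMap.le_opNorm _ _).trans (mul_le_mul_of_nonneg_right (hC' x) (norm_nonneg _))
  have i1 := integrable_bdd_mul_mul _ c1 _ b1 a (∂_{v} b : 𝓢(Ed d, ℂ))
  have i2 := integrable_bdd_mul_mul _ c2 _ b2 a b
  have i3 := integrable_bdd_mul_mul _ c1 _ b1 (∂_{v} a : 𝓢(Ed d, ℂ)) b
  have i4 := integrable_bdd_mul_mul _ c1 _ b1 a b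
  have hd : ∀ x, HasFDerivAt (fun x => (φ x : ℂ)) (Complex.ofRealCLM.comp (fderiv ℝ φ x)) x := fun x =>
    Complex.ofRealCLM.hasFDerivAt.comp x (hφ.differentiable (by simp) x).hasFDerivAt
  have hd2 : ∀ x, HasFDerivAt (fun x => (starRingEnd ℂ) (a x))
      ((Complex.conjCLE : ℂ →L[ℝ] ℂ).comp (fderiv ℝ a x)) x := fun x =>
    (Complex.conjCLE : ℂ →L[ℝ] ℂ).hasFDerivAt.comp x (a.differentiableAt).hasFDerivAt
  have hd3 := fun x => ((hd x).mul (hd x)).mul (hd2 x)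
  let f : Ed d → ℂ := fun x => ((φ x : ℂ) * (φ x : ℂ)) * (starRingEnd ℂ) (a x)
  have hf : ∀ x, fderiv ℝ f x v = 2 * ((φ x : ℂ) * (fderiv ℝ φ x v : ℝ)) * (starRingEnd ℂ) (a x) +
      (φ x : ℂ) ^ 2 * (starRingEnd ℂ) ((∂_{v} a : 𝓢(Ed d, ℂ)) x) := by
    intro x
    have h := (hd3 x).fderiv
    have h' : fderiv ℝ f x = _ := h
    rw [h', lineDerivOp_apply_eq_fderiv]
    simp
    ring
  have e1 : ∀ x, fderiv ℝ f x v * b x = 2 * (((φ x : ℂ) * (fderiv ℝ φ x v : ℝ)) * ((starRingEnd ℂ) (a x) * b x)) +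
      (φ x : ℂ) ^ 2 * ((starRingEnd ℂ) ((∂_{v} a : 𝓢(Ed d, ℂ)) x) * b x) := by
    intro x; rw [hf]; ring
  have e2 : ∀ x, f x * fderiv ℝ b x v = (φ x : ℂ) ^ 2 * ((starRingEnd ℂ) (a x) * (∂_{v} b : 𝓢(Ed d, ℂ)) x) := by
    intro x; rw [lineDerivOp_apply_eq_fderiv]; simp only [f]; ring
  have e3 : ∀ x, f x * b x = (φ x : ℂ) ^ 2 * ((starRingEnd ℂ) (a x) * b x) := by
    intro x; simp only [f]; ring
  have key := integral_mul_fderiv_eq_neg_fderiv_mul_of_integrable (μ := (volume : Measure (Ed d))) (f := f) (g := b) (v := v)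
    (by simp_rw [e1]; exact (i2.const_mul 2).add i3) (by simp_rw [e2]; exact i1) (by simp_rw [e3]; exact i4)
    (fun x _ => (hd3 x).differentiableAt) (fun x _ => b.differentiableAt)
  simp_rw [e1, e2] at key
  rw [key, integral_add (i2.const_mul 2) i3, integral_const_mul]
  ring

lemma ibp_all {d : ℕ} (φ : Ed d → ℝ) (hφ : ContDiff ℝ 1 φ) (C C' : ℝ) (hC : ∀ x, |φ x| ≤ C)
    (hC' : ∀ x, ‖fderiv ℝ φ x‖ ≤ C') (a : 𝓢(Ed d, ℂ)) :
    (∫ x, (φ x : ℂ) ^ 2 * ((starRingEnd ℂ) (a x) * (Δ a) x)).im =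
      -2 * (∫ x, (φ x : ℂ) * (starRingEnd ℂ) (a x) *
        ∑ i, ((fderiv ℝ φ x (stdBasis i) : ℝ) : ℂ) * pd (⇑a) i x).im := by
  have hC0 : 0 ≤ C := (abs_nonneg _).trans (hC 0)
  have c1 : Continuous (fun x => (φ x : ℂ) ^ 2) := (Complex.continuous_ofReal.comp hφ.continuous).pow 2
  have c2 : ∀ v, Continuous (fun x => (φ x : ℂ) * (fderiv ℝ φ x v : ℝ)) := fun v =>
    (Complex.continuous_ofReal.comp hφ.continuous).mul
      (Complex.continuous_ofReal.comp ((hφ.continuous_fderiv (by simp)).clm_apply continuous_const))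
  have b1 : ∀ x, ‖(φ x : ℂ) ^ 2‖ ≤ C ^ 2 := by
    intro x
    rw [norm_pow, Complex.norm_real, Real.norm_eq_abs]
    exact pow_le_pow_left₀ (abs_nonneg _) (hC x) 2
  have b2 : ∀ v x, ‖(φ x : ℂ) * (fderiv ℝ φ x v : ℝ)‖ ≤ C * (C' * ‖v‖) := by
    intro v x
    rw [norm_mul, Complex.norm_real, Complex.norm_real, Real.norm_eq_abs]
    refine mul_le_mul (hC x) ?_ (norm_nonneg _) hC0
    exact (ContinuousLinearMap.le_opNorm _ _).trans (mul_le_mul_of_nonneg_right (hC' x) (norm_nonneg _))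
  have e1 : ∀ x, (φ x : ℂ) ^ 2 * ((starRingEnd ℂ) (a x) * (Δ a) x) =
      ∑ i : Fin d, (φ x : ℂ) ^ 2 * ((starRingEnd ℂ) (a x) * (∂_{stdBasis i} (∂_{stdBasis i} a : 𝓢(Ed d, ℂ)) : 𝓢(Ed d, ℂ)) x) := by
    intro x
    rw [← lap_eq, lap, Finset.mul_sum, Finset.mul_sum]
    simp_rw [pd_eq]
  have e2 : ∀ x, (φ x : ℂ) * (starRingEnd ℂ) (a x) * ∑ i, ((fderiv ℝ φ x (stdBasis i) : ℝ) : ℂ) * pd (⇑a) i x =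
      ∑ i : Fin d, ((φ x : ℂ) * (fderiv ℝ φ x (stdBasis i) : ℝ)) * ((starRingEnd ℂ) (a x) * (∂_{stdBasis i} a : 𝓢(Ed d, ℂ)) x) := by
    intro x
    rw [Finset.mul_sum]
    simp_rw [pd_eq]
    refine Finset.sum_congr rfl fun i _ => by ring
  simp_rw [e1, e2]
  rw [integral_finsetSum _ (fun i _ => integrable_bdd_mul_mul _ c1 _ b1 a _),
    integral_finsetSum _ (fun i _ => integrable_bdd_mul_mul _ (c2 _) _ (b2 _) a _),
    Complex.im_sum, Complex.im_sum, Finset.mul_sum]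
  refine Finset.sum_congr rfl fun i _ => ?_
  rw [ibp_one φ hφ C C' hC hC']
  have hre : ∫ x, (φ x : ℂ) ^ 2 * ((starRingEnd ℂ) ((∂_{stdBasis i} a : 𝓢(Ed d, ℂ)) x) * (∂_{stdBasis i} a : 𝓢(Ed d, ℂ)) x) =
      ((∫ x, φ x ^ 2 * ‖(∂_{stdBasis i} a : 𝓢(Ed d, ℂ)) x‖ ^ 2 : ℝ) : ℂ) := by
    rw [← integral_complex_ofReal]
    congr 1; ext x
    rw [Complex.conj_mul']
    push_cast; ring
  rw [hre]
  simp

lemma mass_ineq (a b w : ℂ) (h : ℝ) (hh : h ≠ 0) :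
    |‖a + h * b + w‖ ^ 2 - ‖a‖ ^ 2 - h * (2 * ((starRingEnd ℂ) a * b).re)| ≤
      h ^ 2 * ‖a‖ ^ 2 + (h ^ 2)⁻¹ * ‖w‖ ^ 2 + 2 * h ^ 2 * ‖b‖ ^ 2 + 2 * ‖w‖ ^ 2 := by
  have hp : 0 < h ^ 2 := by positivity
  rw [← Complex.normSq_eq_norm_sq, ← Complex.normSq_eq_norm_sq, ← Complex.normSq_eq_norm_sq, ← Complex.normSq_eq_norm_sq]
  simp only [Complex.normSq_apply, Complex.add_re, Complex.add_im, Complex.mul_re, Complex.mul_im, Complex.ofReal_re,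
    Complex.ofReal_im, Complex.conj_re, Complex.conj_im]
  set k := (h ^ 2)⁻¹ with hk
  have key : ∀ x y : ℝ, 2 * |x * y| ≤ h ^ 2 * x ^ 2 + k * y ^ 2 := by
    intro x y
    have h1 : 0 ≤ (|h| * |x| - |h|⁻¹ * |y|) ^ 2 := sq_nonneg _
    have h2 : (|h| * |x| - |h|⁻¹ * |y|) ^ 2 = h ^ 2 * x ^ 2 + k * y ^ 2 - 2 * (|h| * |h|⁻¹) * |x * y| := by
      rw [hk, abs_mul, ← sq_abs h, ← sq_abs x, ← sq_abs y, inv_eq_one_div, inv_eq_one_div]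
      field_simp
      ring
    rw [mul_inv_cancel₀ (abs_ne_zero.2 hh)] at h2
    linarith
  have k1 := key a.re w.re
  have k2 := key a.im w.im
  have q1 := abs_le.1 (le_refl |a.re * w.re|)
  have q2 := abs_le.1 (le_refl |a.im * w.im|)
  rw [abs_le]
  constructor
  · nlinarith [sq_nonneg (h * b.re + w.re), sq_nonneg (h * b.im + w.im), mul_self_nonneg (h * b.re), mul_self_nonneg (h * b.im), mul_self_nonneg w.re, mul_self_nonneg w.im]
  · nlinarith [sq_nonneg (h * b.re - w.re), sq_nonneg (h * b.im - w.im)]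

lemma mass_deriv {d : ℕ} {u : ℝ → 𝓢(Ed d, ℂ)} (hu : IsLinSchrodSol d u) (φ : Ed d → ℝ) (hφ : Continuous φ)
    (C : ℝ) (hC : ∀ x, |φ x| ≤ C) (t : ℝ) :
    HasDerivAt (fun s : ℝ => ∫ x, φ x ^ 2 * ‖u s x‖ ^ 2)
      (∫ x, φ x ^ 2 * (2 * ((starRingEnd ℂ) (u t x) * (Complex.I * (Δ (u t)) x)).re)) t := by
  have hC0 : 0 ≤ C := (abs_nonneg _).trans (hC 0)
  have hb : ∀ x, ‖φ x ^ 2‖ ≤ C ^ 2 := by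
    intro x
    rw [norm_pow, Real.norm_eq_abs]
    exact pow_le_pow_left₀ (abs_nonneg _) (hC x) 2
  have i1 : ∀ s, Integrable (fun x => φ x ^ 2 * ‖u s x‖ ^ 2) := fun s =>
    (integrable_sq (u s)).bdd_mul (c := C ^ 2) (hφ.pow 2).aestronglyMeasurable (Eventually.of_forall hb)
  have i2 : Integrable (fun x => φ x ^ 2 * (2 * ((starRingEnd ℂ) (u t x) * (Complex.I * (Δ (u t)) x)).re)) := by
    refine Integrable.bdd_mul (c := C ^ 2) ?_ (hφ.pow 2).aestronglyMeasurable (Eventually.of_forall hb)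
    refine Integrable.const_mul ?_ 2
    have := integrable_bdd_mul_mul (fun _ => 1) continuous_const 1 (by simp) (u t) (Complex.I • Δ (u t))
    refine (this.re).congr (Eventually.of_forall fun x => ?_)
    simp [_root_.smul_apply]
  let A : ℝ := ‖(u t).toLp 2 volume‖
  let B : ℝ := ‖(Δ (u t)).toLp 2 volume‖
  let D : ℝ := ‖(Δ (Δ (u t))).toLp 2 volume‖
  have main : ∀ s ∈ Set.Icc (t - 1) (t + 1),
      ‖(∫ x, φ x ^ 2 * ‖u s x‖ ^ 2) - (∫ x, φ x ^ 2 * ‖u t x‖ ^ 2) -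
        (s - t) • (∫ x, φ x ^ 2 * (2 * ((starRingEnd ℂ) (u t x) * (Complex.I * (Δ (u t)) x)).re))‖ ≤
      (C ^ 2 * (A ^ 2 + 9 * D ^ 2 + 2 * B ^ 2 + 18 * D ^ 2)) * (s - t) ^ 2 := by
    intro s hs
    by_cases hst : s = t
    · rw [hst]; simp
    set h := s - t with hh
    have hh0 : h ≠ 0 := sub_ne_zero.2 hst
    have hh1 : h ^ 2 ≤ 1 := by
      have : |h| ≤ 1 := abs_le.2 ⟨by linarith [hs.1], by linarith [hs.2]⟩
      rw [← sq_abs]; exact pow_le_one₀ (abs_nonneg _) this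
    have hp : 0 < h ^ 2 := by positivity
    have hT := sol_taylor hu t s
    rw [← hh] at hT
    set w : 𝓢(Ed d, ℂ) := u s - u t - ((h : ℂ) * Complex.I) • Δ (u t) with hw
    have hus : ∀ x, u s x = u t x + h * (Complex.I * (Δ (u t)) x) + w x := by
      intro x
      rw [hw, _root_.sub_apply, _root_.sub_apply, _root_.smul_apply, smul_eq_mul]; ring
    have i12 : Integrable (fun x => φ x ^ 2 * ‖u s x‖ ^ 2 - φ x ^ 2 * ‖u t x‖ ^ 2) := (i1 s).sub (i1 t)
    rw [smul_eq_mul, ← integral_const_mul, ← integral_sub (i1 s) (i1 t), ← integral_sub i12 (i2.const_mul h)]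
    have hbound : ∀ x, ‖φ x ^ 2 * ‖u s x‖ ^ 2 - φ x ^ 2 * ‖u t x‖ ^ 2 -
        h * (φ x ^ 2 * (2 * ((starRingEnd ℂ) (u t x) * (Complex.I * (Δ (u t)) x)).re))‖ ≤
        C ^ 2 * (h ^ 2 * ‖u t x‖ ^ 2 + (h ^ 2)⁻¹ * ‖w x‖ ^ 2 + 2 * h ^ 2 * ‖(Δ (u t)) x‖ ^ 2 + 2 * ‖w x‖ ^ 2) := by
      intro x
      have hm := mass_ineq (u t x) (Complex.I * (Δ (u t)) x) (w x) h hh0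
      rw [← hus] at hm
      have hI : ‖Complex.I * (Δ (u t)) x‖ = ‖(Δ (u t)) x‖ := by rw [norm_mul, Complex.norm_I, one_mul]
      rw [hI] at hm
      generalize ((starRingEnd ℂ) (u t x) * (Complex.I * (Δ (u t)) x)).re = R at hm ⊢
      rw [show φ x ^ 2 * ‖u s x‖ ^ 2 - φ x ^ 2 * ‖u t x‖ ^ 2 - h * (φ x ^ 2 * (2 * R)) =
        φ x ^ 2 * (‖u s x‖ ^ 2 - ‖u t x‖ ^ 2 - h * (2 * R)) by ring, norm_mul]
      exact mul_le_mul (hb x) hm (norm_nonneg _) (by positivity)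
    have j1 := (integrable_sq (u t)).const_mul (h ^ 2)
    have j2 := (integrable_sq w).const_mul ((h ^ 2)⁻¹)
    have j3 := (integrable_sq (Δ (u t))).const_mul (2 * h ^ 2)
    have j4 := (integrable_sq w).const_mul 2
    have k2 : Integrable (fun x => h ^ 2 * ‖u t x‖ ^ 2 + (h ^ 2)⁻¹ * ‖w x‖ ^ 2) := j1.add j2
    have k3 : Integrable (fun x => h ^ 2 * ‖u t x‖ ^ 2 + (h ^ 2)⁻¹ * ‖w x‖ ^ 2 + 2 * h ^ 2 * ‖(Δ (u t)) x‖ ^ 2) :=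
      k2.add j3
    have k4 : Integrable (fun x => h ^ 2 * ‖u t x‖ ^ 2 + (h ^ 2)⁻¹ * ‖w x‖ ^ 2 + 2 * h ^ 2 * ‖(Δ (u t)) x‖ ^ 2 +
      2 * ‖w x‖ ^ 2) := k3.add j4
    refine (norm_integral_le_of_norm_le (k4.const_mul (C ^ 2)) (Eventually.of_forall hbound)).trans ?_
    rw [integral_const_mul, integral_add k3 j4, integral_add k2 j3, integral_add j1 j2,
      integral_const_mul, integral_const_mul, integral_const_mul, integral_const_mul,
      ← sq_norm_toLp, ← sq_norm_toLp, ← sq_norm_toLp]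
    have hW : ‖w.toLp 2 volume‖ ^ 2 ≤ (3 * h ^ 2 * D) ^ 2 := pow_le_pow_left₀ (norm_nonneg _) hT 2
    change C ^ 2 * (h ^ 2 * A ^ 2 + (h ^ 2)⁻¹ * ‖w.toLp 2 volume‖ ^ 2 + 2 * h ^ 2 * B ^ 2 + 2 * ‖w.toLp 2 volume‖ ^ 2) ≤ _
    generalize ‖w.toLp 2 volume‖ ^ 2 = W at hW
    rw [mul_assoc (C ^ 2)]
    refine mul_le_mul_of_nonneg_left ?_ (by positivity)
    have r1 : (h ^ 2)⁻¹ * W ≤ 9 * D ^ 2 * h ^ 2 := by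
      rw [inv_mul_le_iff₀ hp]; linarith [hW]
    have r2 : W ≤ 9 * D ^ 2 * h ^ 2 := by
      refine hW.trans ?_
      have : (3 * h ^ 2 * D) ^ 2 = 9 * D ^ 2 * h ^ 2 * h ^ 2 := by ring
      rw [this]
      exact mul_le_of_le_one_right (by positivity) hh1
    linarith
  have := hasDerivWithinAt_of_sq (fun s : ℝ => ∫ x, φ x ^ 2 * ‖u s x‖ ^ 2) _ (Set.Icc (t - 1) (t + 1)) t _ main
  exact this.hasDerivAt (Icc_mem_nhds (by linarith) (by linarith))

/-- For a Schwartz solution of the linear Schrödinger equation and a bounded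
`C¹` function `φ` with bounded gradient, the localized mass `∫ φ² |u(t)|²` is differentiable
in `t` with derivative `4 Im ∫ φ ū (∇φ · ∇u)`. -/
theorem localized_mass_deriv_linear
    {d : ℕ} (hd : 1 ≤ d) (u : ℝ → SchwartzMap (Ed d) ℂ)
    (hu : IsLinSchrodSol d u)
    (φ : Ed d → ℝ) (hφ : ContDiff ℝ 1 φ)
    (hφbdd : ∃ C, ∀ x, |φ x| ≤ C)
    (hφgrad : ∃ C, ∀ x, ‖fderiv ℝ φ x‖ ≤ C)
    (t : ℝ) :
    HasDerivAt (fun s : ℝ => ∫ x, φ x ^ 2 * ‖u s x‖ ^ 2)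
      (4 * (∫ x, (φ x : ℂ) * (starRingEnd ℂ) (u t x) *
        ∑ i, ((fderiv ℝ φ x (stdBasis i) : ℝ) : ℂ) * pd (⇑(u t)) i x).im) t := by
  obtain ⟨C, hC⟩ := hφbdd
  obtain ⟨C', hC'⟩ := hφgrad
  have h1 := mass_deriv hu φ hφ.continuous C hC t
  have h2 := ibp_all φ hφ C C' hC hC' (u t)
  convert h1 using 1
  have c1 : Continuous (fun x => (φ x : ℂ) ^ 2) := (Complex.continuous_ofReal.comp hφ.continuous).pow 2
  have b1 : ∀ x, ‖(φ x : ℂ) ^ 2‖ ≤ C ^ 2 := by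
    intro x
    rw [norm_pow, Complex.norm_real, Real.norm_eq_abs]
    exact pow_le_pow_left₀ (abs_nonneg _) (hC x) 2
  have i1 := integrable_bdd_mul_mul _ c1 _ b1 (u t) (Δ (u t))
  have h3 : (∫ x, (φ x : ℂ) ^ 2 * ((starRingEnd ℂ) (u t x) * (Δ (u t)) x)).im =
      ∫ x, ((φ x : ℂ) ^ 2 * ((starRingEnd ℂ) (u t x) * (Δ (u t)) x)).im := by
    have := integral_im i1
    exact this.symm
  have h4 : ∀ x, φ x ^ 2 * (2 * ((starRingEnd ℂ) (u t x) * (Complex.I * (Δ (u t)) x)).re) =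
      (-2) * ((φ x : ℂ) ^ 2 * ((starRingEnd ℂ) (u t x) * (Δ (u t)) x)).im := by
    intro x
    rw [← Complex.ofReal_pow, Complex.im_ofReal_mul, mul_left_comm ((starRingEnd ℂ) (u t x)), Complex.I_mul_re]
    ring
  simp_rw [h4]
  rw [integral_const_mul, ← h3, h2]
  ring
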